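/- Let n ≥ 3 be an integer and p > 1 with n > 2p/(p−1). Then there exist γ > 0 and l ∈ (0,1], and for these there exist R₀ > 1 and ε₀ ∈ (0,1), such that for every R ≥ R₀ and every ε ∈ (0, ε₀], the function ψ(r,t) = ((r−ε)(R−r))^{−2/(p−1)} · (1+r)^{2/(p−1)} · (1 + (ε/r)^{l} · R^{2/(p−1)}) · exp(γ(t+1)) satisfies ψ_rr + ((n−1)/r) ψ_r − ψ^p − ψ_t ≤ 0 for all r ∈ (ε, R) and all t > 0. -/

import Mathlib

/-- The supersolution `ψ_{R,ε}(r,t)` used in the case `n > 2p/(p-1)`. -/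
noncomputable def psiSup (p γ l R ε r t : ℝ) : ℝ :=
  ((r - ε) * (R - r)) ^ (-2 / (p - 1)) * (1 + r) ^ (2 / (p - 1))
    * (1 + (ε / r) ^ l * R ^ (2 / (p - 1))) * Real.exp (γ * (t + 1))

/-- The logarithmic derivative in `s` of `psiSup p γ l R ε s t`. -/
noncomputable def psiSupLogDeriv (p l R ε s : ℝ) : ℝ :=
  2 / (p - 1) * (-(s - ε)⁻¹ + (R - s)⁻¹ + (1 + s)⁻¹)
    - l * s⁻¹ * ((ε / s) ^ l * R ^ (2 / (p - 1)) / (1 + (ε / s) ^ l * R ^ (2 / (p - 1))))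

lemma hasDerivAt_div_rpow {ε s : ℝ} (l : ℝ) (hε : 0 < ε) (hs : 0 < s) :
    HasDerivAt (fun x => (ε / x) ^ l) (-(l * s⁻¹ * (ε / s) ^ l)) s := by
  have hq : 0 < ε / s := div_pos hε hs
  have h := ((hasDerivAt_inv hs.ne').const_mul ε).rpow_const (p := l)
    (Or.inl (by rw [← div_eq_mul_inv]; exact hq.ne'))
  simp only [← div_eq_mul_inv] at h
  refine h.congr_deriv ?_
  rw [Real.rpow_sub_one hq.ne']
  field_simp

lemma hasDerivAt_psiSup {p γ l R ε s t : ℝ} (hε : 0 < ε) (hs : ε < s) (hR : s < R) :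
    HasDerivAt (fun x => psiSup p γ l R ε x t)
      (psiSup p γ l R ε s t * psiSupLogDeriv p l R ε s) s := by
  have hs0 : 0 < s := hε.trans hs
  have hx : 0 < s - ε := sub_pos.2 hs
  have hy : 0 < R - s := sub_pos.2 hR
  have hz : 0 < 1 + s := by linarith
  have hw : 0 < (ε / s) ^ l * R ^ (2 / (p - 1)) :=
    mul_pos (Real.rpow_pos_of_pos (div_pos hε hs0) _)
      (Real.rpow_pos_of_pos (hs0.trans hR) _)
  have h1 := ((((hasDerivAt_id s).sub_const ε).mul
    ((hasDerivAt_id s).const_sub R)).rpow_const (p := -2 / (p - 1))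
      (Or.inl (mul_pos hx hy).ne'))
  have h2 := ((hasDerivAt_id s).const_add 1).rpow_const (p := 2 / (p - 1)) (Or.inl hz.ne')
  have h3 := ((hasDerivAt_div_rpow l hε hs0).mul_const (R ^ (2 / (p - 1)))).const_add 1
  have h := ((h1.mul h2).mul h3).mul_const (Real.exp (γ * (t + 1)))
  refine h.congr_deriv ?_
  simp only [psiSup, psiSupLogDeriv, id, Pi.mul_apply]
  rw [Real.rpow_sub_one (mul_pos hx hy).ne', Real.rpow_sub_one hz.ne']
  generalize (ε / s) ^ l = a at *
  generalize R ^ (2 / (p - 1)) = b at *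
  generalize ((s - ε) * (R - s)) ^ (-2 / (p - 1)) = c
  generalize (1 + s) ^ (2 / (p - 1)) = d
  have hα : -2 / (p - 1) = -(2 / (p - 1)) := neg_div _ _
  rw [hα]
  generalize 2 / (p - 1) = α
  have hab : 1 + a * b ≠ 0 := by positivity
  field_simp
  ring

lemma hasDerivAt_psiSupLogDeriv {p l R ε s : ℝ} (hε : 0 < ε) (hs : ε < s) (hR : s < R) :
    HasDerivAt (psiSupLogDeriv p l R ε)
      (2 / (p - 1) * ((s - ε)⁻¹ ^ 2 + (R - s)⁻¹ ^ 2 - (1 + s)⁻¹ ^ 2)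
        + l * s⁻¹ ^ 2
          * ((ε / s) ^ l * R ^ (2 / (p - 1)) / (1 + (ε / s) ^ l * R ^ (2 / (p - 1))))
        + l ^ 2 * s⁻¹ ^ 2
          * ((ε / s) ^ l * R ^ (2 / (p - 1)) / (1 + (ε / s) ^ l * R ^ (2 / (p - 1))))
          * (1 - (ε / s) ^ l * R ^ (2 / (p - 1))
            / (1 + (ε / s) ^ l * R ^ (2 / (p - 1))))) s := by
  have hs0 : 0 < s := hε.trans hs
  have hx : 0 < s - ε := sub_pos.2 hs
  have hy : 0 < R - s := sub_pos.2 hR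
  have hz : 0 < 1 + s := by linarith
  have hw : 0 < (ε / s) ^ l * R ^ (2 / (p - 1)) :=
    mul_pos (Real.rpow_pos_of_pos (div_pos hε hs0) _)
      (Real.rpow_pos_of_pos (hs0.trans hR) _)
  have hw1 : 1 + (ε / s) ^ l * R ^ (2 / (p - 1)) ≠ 0 := by positivity
  have h1 := ((hasDerivAt_id s).sub_const ε).fun_inv hx.ne'
  have h2 := ((hasDerivAt_id s).const_sub R).fun_inv hy.ne'
  have h3 := ((hasDerivAt_id s).const_add 1).fun_inv hz.ne'
  have h4 := (hasDerivAt_div_rpow l hε hs0).mul_const (R ^ (2 / (p - 1)))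
  have h5 := h4.fun_div (h4.const_add 1) hw1
  have h := (((h1.fun_neg.fun_add h2).fun_add h3).const_mul (2 / (p - 1))).fun_sub
    (((hasDerivAt_inv hs0.ne').const_mul l).fun_mul h5)
  refine h.congr_deriv ?_
  simp only [id]
  generalize (ε / s) ^ l = a at *
  generalize R ^ (2 / (p - 1)) = b at *
  generalize 2 / (p - 1) = α
  field_simp
  ring

lemma psiSup_pos {p γ l R ε r t : ℝ} (hε : 0 < ε) (hr : ε < r) (hR : r < R) :
    0 < psiSup p γ l R ε r t := by
  have hr0 : 0 < r := hε.trans hr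
  have hR0 : 0 < R := hr0.trans hR
  have hx : 0 < r - ε := sub_pos.2 hr
  have hy : 0 < R - r := sub_pos.2 hR
  unfold psiSup
  positivity

lemma deriv_psiSup_time (p γ l R ε r t : ℝ) :
    deriv (psiSup p γ l R ε r) t = γ * psiSup p γ l R ε r t := by
  have h := ((((hasDerivAt_id t).add_const 1).const_mul γ).exp).const_mul
    (((r - ε) * (R - r)) ^ (-2 / (p - 1)) * (1 + r) ^ (2 / (p - 1))
      * (1 + (ε / r) ^ l * R ^ (2 / (p - 1))))
  refine (h.congr_deriv ?_).deriv
  simp only [psiSup, id]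
  ring

lemma psiSup_rpow_sub_one {p γ l R ε r t : ℝ} (hp : 1 < p) (hε : 0 < ε) (hr : ε < r)
    (hR : r < R) :
    psiSup p γ l R ε r t ^ (p - 1)
      = ((r - ε)⁻¹ * (R - r)⁻¹ * (1 + r)) ^ 2
        * (1 + (ε / r) ^ l * R ^ (2 / (p - 1))) ^ (p - 1)
        * Real.exp (γ * (t + 1) * (p - 1)) := by
  have hr0 : 0 < r := hε.trans hr
  have hR0 : 0 < R := hr0.trans hR
  have hx : 0 < r - ε := sub_pos.2 hr
  have hy : 0 < R - r := sub_pos.2 hR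
  have hp1 : p - 1 ≠ 0 := by linarith
  unfold psiSup
  rw [Real.mul_rpow (by positivity) (by positivity), Real.mul_rpow (by positivity) (by positivity),
    Real.mul_rpow (by positivity) (by positivity), ← Real.rpow_mul (by positivity),
    ← Real.rpow_mul (by positivity), div_mul_cancel₀ _ hp1, div_mul_cancel₀ _ hp1,
    ← Real.exp_mul, Real.rpow_neg (by positivity),
    Real.rpow_two, Real.rpow_two, ← inv_pow, mul_inv, mul_pow _ (1 + r)]

/-- Completing squares in the radial Laplacian of `psiSup` divided by `psiSup`. -/
lemma radial_quadratic_le {α N l c q s x y z : ℝ} (hα : 0 < α) (hc : 0 < c) (hl : 0 < l)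
    (hlN : l + 1 ≤ N) (hq0 : 0 ≤ q) (hq1 : q ≤ 1) (hs : 0 < s) (hsx : s ≤ x)
    (hy : 0 < y) (hz : 0 < z) (hz1 : z ≤ 1) :
    α * (x ^ 2 + y ^ 2 - z ^ 2) + l * s ^ 2 * q + l ^ 2 * s ^ 2 * q * (1 - q)
        + (α * (-x + y + z) - l * s * q) ^ 2 + N * s * (α * (-x + y + z) - l * s * q)
      ≤ (α + α ^ 2) * x ^ 2 - (N - 2 * l) * α * (s * x) + α * c / 2 * x ^ 2
        + (α + 2 * α ^ 2 + N ^ 2 * α / c) * y ^ 2 + (2 * α ^ 2 + N ^ 2 * α / c) := by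
  have hx : 0 < x := hs.trans_le hsx
  have hN : 0 < N := by linarith
  have young : ∀ v, 0 < v → N * α * (s * v) ≤ α * c / 4 * x ^ 2 + N ^ 2 * α / c * v ^ 2 := by
    intro v hv
    have h1 : N * α * (s * v) ≤ N * α * (x * v) := by gcongr
    have h2 : α * c / 4 * x ^ 2 + N ^ 2 * α / c * v ^ 2 - N * α * (x * v)
        = α / c * (c / 2 * x - N * v) ^ 2 := by
      field_simp; ring
    have h3 : 0 ≤ α / c * (c / 2 * x - N * v) ^ 2 := by positivity
    linarith
  have hyy := young y hy
  have hzz := young z hz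
  have hz2 : z ^ 2 ≤ 1 := by nlinarith
  have e1 : 0 ≤ q * l * (N - 1 - l) * s ^ 2 := by
    have : 0 ≤ N - 1 - l := by linarith
    positivity
  have e2 : 0 ≤ 2 * l * (1 - q) * α * (s * x) := by
    have : 0 ≤ 1 - q := by linarith
    positivity
  have e3 : 0 ≤ 2 * l * q * α * (s * (y + z)) := by positivity
  have e4 : 0 ≤ α ^ 2 * (x * (y + z)) := by positivity
  have e5 : 0 ≤ α ^ 2 * (y - z) ^ 2 := by positivity
  have e6 : (N ^ 2 * α / c) * z ^ 2 ≤ N ^ 2 * α / c := by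
    have : 0 ≤ N ^ 2 * α / c := by positivity
    nlinarith
  have e7 : α ^ 2 * z ^ 2 ≤ α ^ 2 := by
    have : 0 ≤ α ^ 2 := by positivity
    nlinarith
  have e8 : 0 ≤ α * z ^ 2 := by positivity
  nlinarith

/-- The nonlinear factor of `psiSup` controls the singularity at the outer radius everywhere, and
the one at the inner radius on the region `δ * r ≤ ε`. -/
lemma psiSup_nonlinearity_bounds {p l R ε r δ : ℝ} (hp : 1 < p) (hl : 0 < l) (hε : 0 < ε)
    (hr : ε < r) (hR : r < R) (hδ : 0 < δ) :
    (R - r)⁻¹ ^ 2 ≤ ((r - ε)⁻¹ * (R - r)⁻¹ * (1 + r)) ^ 2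
        * (1 + (ε / r) ^ l * R ^ (2 / (p - 1))) ^ (p - 1) ∧
    (δ * r ≤ ε → (δ ^ l) ^ (p - 1) * (r - ε)⁻¹ ^ 2 ≤
      ((r - ε)⁻¹ * (R - r)⁻¹ * (1 + r)) ^ 2
        * (1 + (ε / r) ^ l * R ^ (2 / (p - 1))) ^ (p - 1)) := by
  have hr0 : 0 < r := hε.trans hr
  have hR0 : 0 < R := hr0.trans hR
  have hx : 0 < r - ε := sub_pos.2 hr
  have hy : 0 < R - r := sub_pos.2 hR
  have hp1 : 0 < p - 1 := by linarith
  have hw : 0 < (ε / r) ^ l * R ^ (2 / (p - 1)) := by positivity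
  constructor
  · have h1 : 1 ≤ (1 + (ε / r) ^ l * R ^ (2 / (p - 1))) ^ (p - 1) :=
      Real.one_le_rpow (by linarith) hp1.le
    have h2 : (R - r)⁻¹ ≤ (r - ε)⁻¹ * (R - r)⁻¹ * (1 + r) := by
      have : 1 ≤ (r - ε)⁻¹ * (1 + r) := by
        rw [inv_mul_eq_div, one_le_div hx]; linarith
      have hy' : 0 < (R - r)⁻¹ := inv_pos.2 hy
      nlinarith
    calc (R - r)⁻¹ ^ 2 ≤ ((r - ε)⁻¹ * (R - r)⁻¹ * (1 + r)) ^ 2 := by gcongr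
      _ ≤ _ := le_mul_of_one_le_right (by positivity) h1
  · intro h
    have hδr : δ ≤ ε / r := (le_div_iff₀ hr0).2 h
    have h1 : (δ ^ l) ^ (p - 1) * R ^ 2
        ≤ (1 + (ε / r) ^ l * R ^ (2 / (p - 1))) ^ (p - 1) := by
      have h2 : δ ^ l * R ^ (2 / (p - 1)) ≤ 1 + (ε / r) ^ l * R ^ (2 / (p - 1)) := by
        have : δ ^ l * R ^ (2 / (p - 1)) ≤ (ε / r) ^ l * R ^ (2 / (p - 1)) := by gcongr
        linarith
      have h3 := Real.rpow_le_rpow (by positivity) h2 hp1.le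
      rwa [Real.mul_rpow (by positivity) (by positivity), ← Real.rpow_mul hR0.le,
        div_mul_cancel₀ _ hp1.ne', Real.rpow_two] at h3
    have h2 : 1 ≤ (R - r)⁻¹ * (1 + r) * R := by
      rw [inv_mul_eq_div, div_mul_eq_mul_div, one_le_div hy]
      nlinarith
    have h3 : 1 ≤ ((R - r)⁻¹ * (1 + r) * R) ^ 2 := one_le_pow₀ h2
    calc (δ ^ l) ^ (p - 1) * (r - ε)⁻¹ ^ 2
        ≤ (δ ^ l) ^ (p - 1) * (r - ε)⁻¹ ^ 2 * ((R - r)⁻¹ * (1 + r) * R) ^ 2 :=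
          le_mul_of_one_le_right (by positivity) h3
      _ = ((r - ε)⁻¹ * (R - r)⁻¹ * (1 + r)) ^ 2 * ((δ ^ l) ^ (p - 1) * R ^ 2) := by ring
      _ ≤ _ := by gcongr

/-- for `n > 2p/(p-1)` there are `γ > 0`, `l ∈ (0,1]`, and thresholds
`R₀ > 1`, `ε₀ ∈ (0,1)` such that `ψ_{R,ε}` is a supersolution for all `R ≥ R₀`,
`ε ∈ (0,ε₀]`. -/
theorem psiSup_is_supersolution
    (n : ℕ) (hn : 3 ≤ n) (p : ℝ) (hp : 1 < p) (hnp : 2 * p / (p - 1) < (n : ℝ)) :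
    ∃ γ > (0:ℝ), ∃ l ∈ Set.Ioc (0:ℝ) 1, ∃ R₀ > (1:ℝ), ∃ ε₀ ∈ Set.Ioo (0:ℝ) 1,
      ∀ R ≥ R₀, ∀ ε ∈ Set.Ioc (0:ℝ) ε₀, ∀ r ∈ Set.Ioo ε R, ∀ t : ℝ, 0 < t →
        deriv (deriv fun s => psiSup p γ l R ε s t) r
          + (((n : ℝ) - 1) / r) * deriv (fun s => psiSup p γ l R ε s t) r
          - psiSup p γ l R ε r t ^ p
          - deriv (psiSup p γ l R ε r) t ≤ 0 := by
  have hp1 : 0 < p - 1 := by linarith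
  have hn' : (3 : ℝ) ≤ n := by exact_mod_cast hn
  obtain ⟨α, hα_def⟩ : ∃ α, α = 2 / (p - 1) := ⟨_, rfl⟩
  have hα : 0 < α := by rw [hα_def]; positivity
  have hcrit : 2 * p / (p - 1) = 2 + α := by rw [hα_def]; field_simp; ring
  obtain ⟨c, hc_def⟩ : ∃ c, c = (n : ℝ) - 2 - α := ⟨_, rfl⟩
  have hc : 0 < c := by linarith
  obtain ⟨N, hN_def⟩ : ∃ N, N = (n : ℝ) - 1 := ⟨_, rfl⟩
  obtain ⟨l, hl_def⟩ : ∃ l, l = min 1 (c / 8) := ⟨_, rfl⟩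
  have hl : 0 < l := by rw [hl_def]; positivity
  have hl1 : l ≤ 1 := hl_def ▸ min_le_left _ _
  have hlc : l ≤ c / 8 := hl_def ▸ min_le_right _ _
  have hm : 0 < N - 2 * l := by linarith
  obtain ⟨δ, hδ_def⟩ : ∃ δ, δ = c / 4 / (N - 2 * l) := ⟨_, rfl⟩
  have hδ : 0 < δ := by rw [hδ_def]; positivity
  have hmδ : (N - 2 * l) * δ = c / 4 := by rw [hδ_def]; field_simp
  obtain ⟨d, hd_def⟩ : ∃ d, d = (δ ^ l) ^ (p - 1) := ⟨_, rfl⟩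
  have hd : 0 < d := by rw [hd_def]; positivity
  obtain ⟨A, hA_def⟩ : ∃ A, A = 2 * α ^ 2 + N ^ 2 * α / c := ⟨_, rfl⟩
  have hA : 0 < A := by rw [hA_def]; positivity
  obtain ⟨B, hB_def⟩ : ∃ B, B = α + 2 * α ^ 2 + N ^ 2 * α / c := ⟨_, rfl⟩
  have hB : 0 < B := by rw [hB_def]; positivity
  obtain ⟨C, hC_def⟩ : ∃ C, C = α + α ^ 2 + α * c / 2 := ⟨_, rfl⟩
  have hC : 0 < C := by rw [hC_def]; positivity
  obtain ⟨γ, hγ_def⟩ : ∃ γ, γ = A + (B + C / d) / (p - 1) := ⟨_, rfl⟩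
  have hγ : 0 < γ := by rw [hγ_def]; positivity
  have hγA : A ≤ γ := by
    have : 0 ≤ (B + C / d) / (p - 1) := by positivity
    linarith
  have hγB : B + C / d ≤ γ * (p - 1) := by
    have : γ * (p - 1) = A * (p - 1) + (B + C / d) := by rw [hγ_def]; field_simp
    have : 0 < A * (p - 1) := by positivity
    linarith
  refine ⟨γ, hγ, l, ⟨hl, hl1⟩, 2, by norm_num, 1 / 2, by norm_num, ?_⟩
  rintro R - ε ⟨hε, -⟩ r ⟨hr, hR⟩ t ht
  have hr0 : 0 < r := hε.trans hr
  have hR0 : 0 < R := hr0.trans hR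
  have hx : 0 < r - ε := sub_pos.2 hr
  have hy : 0 < R - r := sub_pos.2 hR
  have hderiv : deriv (fun s => psiSup p γ l R ε s t) =ᶠ[nhds r]
      fun s => psiSup p γ l R ε s t * psiSupLogDeriv p l R ε s := by
    filter_upwards [Ioo_mem_nhds hr hR] with s hs
    exact (hasDerivAt_psiSup hε hs.1 hs.2).deriv
  rw [hderiv.deriv_eq, hderiv.eq_of_nhds,
    ((hasDerivAt_psiSup hε hr hR).fun_mul (hasDerivAt_psiSupLogDeriv hε hr hR)).deriv,
    deriv_psiSup_time]
  have hψ : 0 < psiSup p γ l R ε r t := psiSup_pos hε hr hR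
  have hpow : psiSup p γ l R ε r t ^ p
      = psiSup p γ l R ε r t * psiSup p γ l R ε r t ^ (p - 1) := by
    rw [Real.rpow_sub_one hψ.ne']; field_simp
  rw [hpow, psiSup_rpow_sub_one hp hε hr hR]
  obtain ⟨hTy, hTx⟩ := psiSup_nonlinearity_bounds (δ := δ) hp hl hε hr hR hδ
  have hw : 0 < (ε / r) ^ l * R ^ (2 / (p - 1)) := by positivity
  have hz1 : (1 + r)⁻¹ ≤ 1 := inv_le_one_of_one_le₀ (by linarith)
  have hsx : r⁻¹ ≤ (r - ε)⁻¹ := inv_anti₀ hx (by linarith)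
  have hS := radial_quadratic_le (N := N) (c := c) (l := l) hα hc hl (by linarith)
    (q := (ε / r) ^ l * R ^ (2 / (p - 1)) / (1 + (ε / r) ^ l * R ^ (2 / (p - 1))))
    (by positivity) ((div_le_one (by positivity)).2 (by linarith))
    (inv_pos.2 hr0) hsx (inv_pos.2 hy) (inv_pos.2 (by linarith : 0 < 1 + r)) hz1
  have hexp : B + C / d ≤ Real.exp (γ * (t + 1) * (p - 1)) := by
    have h1 := Real.add_one_le_exp (γ * (t + 1) * (p - 1))
    have h2 : 0 < γ * t * (p - 1) := by positivity
    linarith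
  rw [← hB_def, ← hA_def] at hS
  rw [← hd_def] at hTx
  unfold psiSupLogDeriv
  rw [hα_def] at hS
  generalize hq : (ε / r) ^ l * R ^ (2 / (p - 1)) / (1 + (ε / r) ^ l * R ^ (2 / (p - 1))) = q at *
  generalize hT : ((r - ε)⁻¹ * (R - r)⁻¹ * (1 + r)) ^ 2
    * (1 + (ε / r) ^ l * R ^ (2 / (p - 1))) ^ (p - 1) = T at *
  rw [← hα_def] at hS ⊢
  have hT0 : 0 ≤ T := (by positivity : 0 ≤ (R - r)⁻¹ ^ 2).trans hTy
  have hKT : (B + C / d) * T ≤ T * Real.exp (γ * (t + 1) * (p - 1)) := by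
    rw [mul_comm T]; gcongr
  have hBT : B * (R - r)⁻¹ ^ 2 ≤ B * T := by gcongr
  have hrad : (α + α ^ 2) * (r - ε)⁻¹ ^ 2 - (N - 2 * l) * α * (r⁻¹ * (r - ε)⁻¹)
      + α * c / 2 * (r - ε)⁻¹ ^ 2 ≤ C / d * T := by
    rcases le_total (δ * r) ε with h | h
    · have h1 : (r - ε)⁻¹ ^ 2 ≤ T / d := by
        rw [le_div_iff₀ hd, mul_comm]; exact hTx h
      have h2 : C * (r - ε)⁻¹ ^ 2 ≤ C * (T / d) := by gcongr
      have h3 : 0 ≤ (N - 2 * l) * α * (r⁻¹ * (r - ε)⁻¹) := by positivity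
      have h4 : C * (T / d) = C / d * T := by ring
      rw [hC_def] at h2 h4 ⊢
      linarith
    · have h1 : (1 - δ) * (r - ε)⁻¹ ≤ r⁻¹ := by
        rw [← div_eq_mul_inv, ← one_div, div_le_div_iff₀ hx hr0]
        linarith
      have h2 : (N - 2 * l) * α * ((1 - δ) * (r - ε)⁻¹ * (r - ε)⁻¹)
          ≤ (N - 2 * l) * α * (r⁻¹ * (r - ε)⁻¹) := by gcongr
      have h3 : (N - 2 * l) * α * ((1 - δ) * (r - ε)⁻¹ * (r - ε)⁻¹)
          = (N - 2 * l - (N - 2 * l) * δ) * (α * (r - ε)⁻¹ ^ 2) := by ring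
      rw [hmδ] at h3
      have h4 : (1 + α + c / 2) * (α * (r - ε)⁻¹ ^ 2)
          ≤ (N - 2 * l - c / 4) * (α * (r - ε)⁻¹ ^ 2) := by
        gcongr
        linarith
      have h5 : 0 ≤ C / d * T := by positivity
      linarith
  rw [← hN_def, div_eq_mul_inv N r]
  have hfinal := mul_nonpos_of_nonneg_of_nonpos hψ.le
    (sub_nonpos.2 (hS.trans (by linarith : _ ≤ γ + T * Real.exp (γ * (t + 1) * (p - 1)))))
  linarith
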